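/- Suppose Φ is infinite and B is positive semidefinite (but not positive definite), i.e., (Φ,Δ) is an affine based root system. Then E(Φ) is finite. If moreover (Φ,Δ) is irreducible, then E(Φ) is a singleton and E(Φ) = Q̂ = Q ∩ V₁. -/

import Mathlib

open Filter Topology

noncomputable section

variable {ι V : Type*} [Fintype ι] [NormedAddCommGroup V] [NormedSpace ℝ V]

/-- The set of simple `B`-reflections: the linear automorphisms of `V` given by the
`B`-reflection formula `u ↦ u - 2 (B α u / B α α) • α` associated to a simple root `α ∈ Δ`. -/
def simpleReflections (B : LinearMap.BilinForm ℝ V) (Δ : Module.Basis ι ℝ V) :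
    Set (V ≃ₗ[ℝ] V) :=
  { e | ∃ i : ι, ∀ u : V, e u = u - (2 * B (Δ i) u / B (Δ i) (Δ i)) • Δ i }

/-- The geometric Coxeter group `W`: the subgroup of linear automorphisms of `V`
generated by the simple `B`-reflections. -/
def cox (B : LinearMap.BilinForm ℝ V) (Δ : Module.Basis ι ℝ V) : Subgroup (V ≃ₗ[ℝ] V) :=
  Subgroup.closure (simpleReflections B Δ)

/-- The root system `Φ = W ⬝ Δ`. -/
def Phi (B : LinearMap.BilinForm ℝ V) (Δ : Module.Basis ι ℝ V) : Set V :=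
  { ρ | ∃ w ∈ cox B Δ, ∃ i : ι, w (Δ i) = ρ }

/-- The positive roots `Φ⁺ = Φ ∩ cone(Δ)`. -/
def posPhi (B : LinearMap.BilinForm ℝ V) (Δ : Module.Basis ι ℝ V) : Set V :=
  { ρ ∈ Phi B Δ | ∀ i : ι, 0 ≤ Δ.repr ρ i }

/-- `|v|₁`: the sum of the coordinates of `v` in the basis `Δ`. -/
def l1 (Δ : Module.Basis ι ℝ V) (v : V) : ℝ := ∑ i : ι, Δ.repr v i

/-- The normalization map `v ↦ v̂ = v / |v|₁`. -/
def nrm (Δ : Module.Basis ι ℝ V) (v : V) : V := (l1 Δ v)⁻¹ • v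

/-- The set `Φ̂` of normalized roots. -/
def nPhi (B : LinearMap.BilinForm ℝ V) (Δ : Module.Basis ι ℝ V) : Set V :=
  nrm Δ '' posPhi B Δ

/-- `E(Φ)`: the set of accumulation points of the set of normalized roots. -/
def Eset (B : LinearMap.BilinForm ℝ V) (Δ : Module.Basis ι ℝ V) : Set V :=
  { x | AccPt x (𝓟 (nPhi B Δ)) }

/-- The isotropic cone `Q` of `B`. -/
def isoQ (B : LinearMap.BilinForm ℝ V) : Set V := { v | B v v = 0 }

/-!
`W` is a quotient of the Coxeter group with the same Coxeter matrix, so a length induction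
through rank two subgroups shows that every root is a nonnegative or a nonpositive combination
of simple roots. Hence an element of `W` close to the identity, which preserves the signs of the
simple roots, is the identity, and `Φ` is discrete. So only finitely many positive roots have
bounded height, and since `B ρ̂ ρ̂ = 1 / |ρ|₁ ^ 2` every accumulation point of the normalized
roots is isotropic; as each root is supported on one irreducible component, so is each
accumulation point. When `B` is positive semidefinite, isotropic vectors lie in its radical,
and, as the off-diagonal Gram entries are nonpositive, a radical vector supported on one
component has coordinates of constant sign. Two of them with equal coordinate sum therefore
coincide, leaving one accumulation point per component at most.
-/

section Chebyshev

open Polynomial Polynomial.Chebyshev Real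

variable {k : ℕ}

lemma sin_pi_div_pos (hk : 2 ≤ k) : 0 < sin (π / k) := by
  have hk' : (1 : ℝ) < k := mod_cast hk
  exact sin_pos_of_pos_of_lt_pi (by positivity) (div_lt_self pi_pos hk')

lemma cos_pi_div_nonneg (hk : 2 ≤ k) : 0 ≤ cos (π / k) := by
  have hk' : (2 : ℝ) ≤ k := mod_cast hk
  have h : π / k ≤ π / 2 := div_le_div_of_nonneg_left pi_pos.le two_pos hk'
  have h0 : 0 ≤ π / k := div_nonneg pi_pos.le k.cast_nonneg
  exact cos_nonneg_of_neg_pi_div_two_le_of_le (by linarith [pi_pos]) h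

lemma eval_U_nonneg_and_le_of_one_le {c : ℝ} (hc : 1 ≤ c) (n : ℕ) :
    0 ≤ (U ℝ (n - 1)).eval c ∧ (U ℝ (n - 1)).eval c ≤ (U ℝ n).eval c := by
  induction n with
  | zero => simp
  | succ n ih =>
    obtain ⟨hpos, hmono⟩ := ih
    simp only [Nat.cast_add, Nat.cast_one, add_sub_cancel_right, U_add_one, eval_sub, eval_mul,
      eval_ofNat, eval_X]
    exact ⟨hpos.trans hmono, by nlinarith⟩

lemma eval_U_cos_pi_div_nonneg (hk : 2 ≤ k) {n : ℕ} (hn : n ≤ k) :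
    0 ≤ (U ℝ (n - 1)).eval (cos (π / k)) := by
  have hk0 : (0 : ℝ) < k := by positivity
  have hsin : 0 ≤ sin (n * (π / k)) := by
    refine sin_nonneg_of_nonneg_of_le_pi (by positivity) ?_
    rw [mul_div_assoc', div_le_iff₀ hk0, mul_comm]
    gcongr
  have h := U_real_cos (π / k) (n - 1)
  push_cast at h
  rw [sub_add_cancel] at h
  exact nonneg_of_mul_nonneg_left (h ▸ hsin) (sin_pi_div_pos hk)

lemma eval_U_two_mul_cos_pi_div (hk : 2 ≤ k) : (U ℝ (2 * k)).eval (cos (π / k)) = 1 := by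
  have hk0 : (k : ℝ) ≠ 0 := by positivity
  refine mul_right_cancel₀ (sin_pi_div_pos hk).ne' ?_
  have h : ((2 * k : ℤ) + 1) * (π / k) = π / k + 2 * π := by push_cast; field_simp; ring
  rw [U_real_cos, one_mul]
  push_cast at h ⊢
  rw [h, sin_add_two_pi]

lemma eval_U_two_mul_sub_one_cos_pi_div (hk : 2 ≤ k) :
    (U ℝ (2 * k - 1)).eval (cos (π / k)) = 0 := by
  have hk0 : (k : ℝ) ≠ 0 := by positivity
  refine mul_right_cancel₀ (sin_pi_div_pos hk).ne' ?_
  have h : (2 * k : ℝ) * (π / k) = 2 * π := by field_simp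
  rw [U_real_cos, zero_mul]
  push_cast
  rw [sub_add_cancel, h, sin_two_pi]

end Chebyshev

section UnitReflection

open Polynomial Polynomial.Chebyshev

variable {K E : Type*} [Field K] [AddCommGroup E] [Module K E] {B : LinearMap.BilinForm K E}
  {x y : E}

/-- The `B`-reflection in a vector `x` with `B x x = 1`, so that the denominator in the reflection
formula disappears. -/
def unitReflection (hx : B x x = 1) : E ≃ₗ[K] E :=
  Module.reflection (x := x) (f := (2 : K) • B x) (by simp [hx])

lemma unitReflection_apply (hx : B x x = 1) (u : E) :
    unitReflection hx u = u - (2 * B x u) • x :=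
  Module.reflection_apply _ _

lemma unitReflection_apply_self (hx : B x x = 1) : unitReflection hx x = -x :=
  Module.reflection_apply_self _

lemma unitReflection_mul_self (hx : B x x = 1) : unitReflection hx * unitReflection hx = 1 :=
  LinearEquiv.ext (Module.involutive_reflection _)

lemma unitReflection_inv (hx : B x x = 1) : (unitReflection hx)⁻¹ = unitReflection hx :=
  Module.reflection_inv _

lemma apply_unitReflection (hB : B.IsSymm) (hx : B x x = 1) (u v : E) :
    B (unitReflection hx u) (unitReflection hx v) = B u v := by
  simp only [unitReflection_apply, map_sub, map_smul, LinearMap.sub_apply, LinearMap.smul_apply,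
    smul_eq_mul, hx, hB.eq u x]
  ring

lemma unitReflection_mul_unitReflection_pow_apply_self (hB : B.IsSymm) (hx : B x x = 1)
    (hy : B y y = 1) (m : ℕ) :
    ((unitReflection hx * unitReflection hy) ^ m) x =
      (U K (2 * m)).eval (-B x y) • x + (U K (2 * m - 1)).eval (-B x y) • y := by
  induction m with
  | zero => simp
  | succ m ih =>
    have h₁ := congr_arg (eval (-B x y)) (U_add_one K (2 * m))
    have h₂ := congr_arg (eval (-B x y)) (U_add_two K (2 * m))
    simp only [eval_sub, eval_mul, eval_ofNat, eval_X] at h₁ h₂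
    have hodd : (2 * m + 2 - 1 : ℤ) = 2 * m + 1 := by ring
    rw [pow_succ', LinearEquiv.mul_apply, LinearEquiv.mul_apply, ih, Nat.cast_succ, mul_add_one,
      h₂, hodd, h₁]
    simp only [unitReflection_apply, map_add, map_sub, map_smul, hx, hy, hB.eq y x]
    module

lemma unitReflection_mul_unitReflection_pow_apply_self' (hB : B.IsSymm) (hx : B x x = 1)
    (hy : B y y = 1) (m : ℕ) :
    (unitReflection hy * (unitReflection hx * unitReflection hy) ^ m) x =
      (U K (2 * m)).eval (-B x y) • x + (U K (2 * m + 1)).eval (-B x y) • y := by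
  rw [LinearEquiv.mul_apply, unitReflection_mul_unitReflection_pow_apply_self hB, U_add_one]
  simp only [unitReflection_apply, map_add, map_smul, hy, hB.eq y x, eval_sub, eval_mul,
    eval_ofNat, eval_X]
  module

lemma mul_unitReflection_mul_inv (hx : B x x = 1) {g : E ≃ₗ[K] E}
    (hg : ∀ u v, B (g u) (g v) = B u v) :
    g * unitReflection hx * g⁻¹ = unitReflection ((hg x x).trans hx) := by
  ext u
  have hu : B x (g⁻¹ u) = B (g x) u := by
    rw [← hg]
    exact congr_arg _ (g.apply_symm_apply u)
  rw [LinearEquiv.mul_apply, LinearEquiv.mul_apply, unitReflection_apply, unitReflection_apply,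
    map_sub, map_smul, hu]
  exact congr_arg (· - _) (g.apply_symm_apply u)

/-- Off the plane spanned by `x` and `y`, which is nondegenerate because `B x y ≠ ±1`, both
reflections act trivially. -/
lemma eq_one_of_apply_eq (hB : B.IsSymm) (hx : B x x = 1) (hy : B y y = 1)
    (hxy : B x y ^ 2 ≠ 1) {g : E ≃ₗ[K] E} (hgx : g x = x) (hgy : g y = y)
    (hg : ∀ z, B x z = 0 → B y z = 0 → g z = z) : g = 1 := by
  ext u
  have hd : 1 - B x y ^ 2 ≠ 0 := sub_ne_zero.2 hxy.symm
  set p := (B x u - B x y * B y u) / (1 - B x y ^ 2) with hp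
  set q := (B y u - B x y * B x u) / (1 - B x y ^ 2) with hq
  have hz : g (u - p • x - q • y) = u - p • x - q • y := by
    apply hg <;>
    · simp only [map_sub, map_smul, smul_eq_mul, hx, hy, hB.eq y x, hp, hq]
      field_simp
      ring
  simpa [hgx, hgy] using hz

lemma unitReflection_mul_unitReflection_pow_eq_one {E : Type*} [AddCommGroup E]
    [Module ℝ E] {B : LinearMap.BilinForm ℝ E} {x y : E} (hB : B.IsSymm) (hx : B x x = 1)
    (hy : B y y = 1) {k : ℕ} (hk : 2 ≤ k) (hxy : B x y = -Real.cos (Real.pi / k)) :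
    (unitReflection hx * unitReflection hy) ^ k = 1 := by
  have fixes {x y : E} (hx : B x x = 1) (hy : B y y = 1) (hxy : B x y = -Real.cos (Real.pi / k)) :
      ((unitReflection hx * unitReflection hy) ^ k) x = x := by
    rw [unitReflection_mul_unitReflection_pow_apply_self hB, hxy, neg_neg,
      eval_U_two_mul_cos_pi_div hk, eval_U_two_mul_sub_one_cos_pi_div hk, one_smul, zero_smul,
      add_zero]
  refine eq_one_of_apply_eq hB hx hy ?_ (fixes hx hy hxy) ?_ fun z hxz hyz ↦ ?_
  · have := Real.sin_sq_add_cos_sq (Real.pi / k)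
    have := pow_pos (sin_pi_div_pos hk) 2
    rw [hxy]
    nlinarith
  · have hinv : (unitReflection hx * unitReflection hy) ^ k =
        ((unitReflection hy * unitReflection hx) ^ k)⁻¹ := by
      rw [← inv_pow, mul_inv_rev, unitReflection_inv, unitReflection_inv]
    rw [hinv]
    exact (LinearEquiv.symm_apply_eq _).2 (fixes hy hx (hB.eq y x ▸ hxy)).symm
  · have : unitReflection hx z = z ∧ unitReflection hy z = z := by
      simp [unitReflection_apply, hxz, hyz]
    rw [LinearEquiv.pow_apply]
    exact Function.iterate_fixed (by rw [LinearEquiv.mul_apply, this.2, this.1]) k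

end UnitReflection

section ParabolicDecomposition

open CoxeterSystem

lemma exists_eq_mul_wordProd_alternatingWord {κ W : Type*} [Group W] {M : CoxeterMatrix κ}
    (cs : CoxeterSystem M W) {w : W} {i : κ} (j : κ) (hw : ¬cs.IsRightDescent w i) :
    ∃ v n, w = v * cs.wordProd (alternatingWord i j n) ∧ cs.length w = cs.length v + n ∧
      ¬cs.IsRightDescent v i ∧ ¬cs.IsRightDescent v j := by
  induction hl : cs.length w generalizing w i j with
  | zero => exact ⟨1, 0, by simp [cs.length_eq_zero_iff.1 hl, alternatingWord],
      by simp, cs.not_isRightDescent_one i,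
      cs.not_isRightDescent_one j⟩
  | succ l ih =>
    by_cases hj : cs.IsRightDescent w j
    · have hlen : cs.length (w * cs.simple j) = l := by
        have := cs.isRightDescent_iff.1 hj
        lia
      obtain ⟨v, n, hv, hvn, hvj, hvi⟩ :=
        ih i (cs.isRightDescent_iff_not_isRightDescent_mul.1 hj) hlen
      refine ⟨v, n + 1, ?_, by lia, hvi, hvj⟩
      rw [alternatingWord_succ, wordProd_concat, ← mul_assoc, ← hv,
        cs.simple_mul_simple_cancel_right]
    · exact ⟨w, 0, by simp [alternatingWord], by simp [hl], hw, hj⟩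

lemma le_of_length_mul_wordProd_alternatingWord {κ W : Type*} [Group W] {M : CoxeterMatrix κ}
    {cs : CoxeterSystem M W} {v : W} {i j : κ} {n : ℕ}
    (hlen : cs.length (v * cs.wordProd (alternatingWord i j n)) = cs.length v + n)
    (hM : M i j ≠ 0) : n ≤ M i j := by
  by_contra! hn
  refine cs.not_isReduced_alternatingWord i j hM hn ?_
  have h₁ := cs.length_mul_le v (cs.wordProd (alternatingWord i j n))
  have h₂ := cs.length_wordProd_le (alternatingWord i j n)
  rw [length_alternatingWord] at h₂
  rw [CoxeterSystem.IsReduced, length_alternatingWord]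
  lia

end ParabolicDecomposition

/-- The graph joining two indices of a symmetric matrix when the entry there is nonzero. Its
connected components are the irreducible components of the root system with that Gram matrix. -/
def matrixGraph {κ : Type*} (A : Matrix κ κ ℝ) : SimpleGraph κ :=
  SimpleGraph.fromRel fun i j ↦ A i j ≠ 0

lemma matrixGraph_reachable {κ : Type*} {A : Matrix κ κ ℝ} {i j : κ} (hij : A i j ≠ 0) :
    (matrixGraph A).Reachable i j := by
  obtain rfl | hne := eq_or_ne i j
  · exact .refl i
  · exact SimpleGraph.Adj.reachable ((SimpleGraph.fromRel_adj _ _ _).2 ⟨hne, .inl hij⟩)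

lemma supp_eq_univ_of_irreducible {κ : Type*} {A : Matrix κ κ ℝ}
    (C : (matrixGraph A).ConnectedComponent)
    (hA : ¬∃ I : Set κ, I.Nonempty ∧ Iᶜ.Nonempty ∧ ∀ i ∈ I, ∀ j ∈ Iᶜ, A i j = 0) :
    C.supp = Set.univ := by
  by_contra hC
  refine hA ⟨C.supp, C.nonempty_supp, Set.nonempty_compl.2 hC, fun i hi j hj ↦ ?_⟩
  by_contra hij
  have hreach : (matrixGraph A).Reachable i j := matrixGraph_reachable hij
  exact hj ((SimpleGraph.ConnectedComponent.eq.2 hreach.symm).trans hi)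

/-- The Gram matrix of a family of vectors with respect to a bilinear form. -/
def gramMatrix {κ E : Type*} [AddCommGroup E] [Module ℝ E] (B : LinearMap.BilinForm ℝ E)
    (α : κ → E) : Matrix κ κ ℝ :=
  .of fun i j ↦ B (α i) (α j)

/-- The axioms of a based root system on its family `α` of simple roots, linear independence
excepted. -/
structure IsSimpleSystem {κ E : Type*} [AddCommGroup E] [Module ℝ E]
    (B : LinearMap.BilinForm ℝ E) (α : κ → E) : Prop where
  isSymm : B.IsSymm
  apply_self : ∀ i, B (α i) (α i) = 1
  apply_of_ne : ∀ i j, i ≠ j → B (α i) (α j) ≤ -1 ∨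
    ∃ k : ℕ, 2 ≤ k ∧ B (α i) (α j) = -Real.cos (Real.pi / k)

namespace IsSimpleSystem

variable {κ E : Type*} [AddCommGroup E] [Module ℝ E] {B : LinearMap.BilinForm ℝ E} {α : κ → E}

lemma apply_nonpos (h : IsSimpleSystem B α) {i j : κ} (hij : i ≠ j) : B (α i) (α j) ≤ 0 := by
  obtain hle | ⟨k, hk, heq⟩ := h.apply_of_ne i j hij
  · linarith
  · linarith [cos_pi_div_nonneg hk]

open scoped Classical in
/-- The Coxeter matrix of a simple system, whose `(i, j)` entry is the order of the product of the
`i`-th and `j`-th reflections. When `B (α i) (α j) ≤ -1` the infimum is over the empty set, so the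
entry is `0`, which is how `CoxeterMatrix` encodes infinite order. -/
def coxeterMatrix (h : IsSimpleSystem B α) : CoxeterMatrix κ where
  M := .of fun i j ↦ if i = j then 1 else
    sInf {k : ℕ | 2 ≤ k ∧ B (α i) (α j) = -Real.cos (Real.pi / k)}
  isSymm := by
    ext i j
    simp only [Matrix.transpose_apply, Matrix.of_apply, h.isSymm.eq (α j), eq_comm (a := j)]
  diagonal i := by simp
  off_diagonal i j hij hM := by
    rw [Matrix.of_apply, if_neg hij] at hM
    have hmem := Nat.sInf_mem (Nat.nonempty_of_pos_sInf (hM ▸ one_pos))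
    rw [hM] at hmem
    exact absurd hmem.1 (by norm_num)

lemma coxeterMatrix_of_ne (h : IsSimpleSystem B α) {i j : κ} (hij : i ≠ j) :
    h.coxeterMatrix i j = 0 ∧ B (α i) (α j) ≤ -1 ∨
      2 ≤ h.coxeterMatrix i j ∧
        B (α i) (α j) = -Real.cos (Real.pi / h.coxeterMatrix i j) := by
  have hM : h.coxeterMatrix i j =
      sInf {k : ℕ | 2 ≤ k ∧ B (α i) (α j) = -Real.cos (Real.pi / k)} := if_neg hij
  obtain hempty | hne :=
    {k : ℕ | 2 ≤ k ∧ B (α i) (α j) = -Real.cos (Real.pi / k)}.eq_empty_or_nonempty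
  · refine .inl ⟨by rw [hM, hempty, Nat.sInf_empty], (h.apply_of_ne i j hij).resolve_right ?_⟩
    rintro ⟨k, hk⟩
    exact hempty.subset hk
  · exact .inr (hM ▸ Nat.sInf_mem hne)

/-- The reflection in the `i`-th simple root. -/
def simpleReflection (h : IsSimpleSystem B α) (i : κ) : E ≃ₗ[ℝ] E :=
  unitReflection (h.apply_self i)

lemma isLiftable_simpleReflection (h : IsSimpleSystem B α) :
    h.coxeterMatrix.IsLiftable h.simpleReflection := by
  intro i j
  obtain rfl | hij := eq_or_ne i j
  · rw [h.coxeterMatrix.diagonal, pow_one]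
    exact unitReflection_mul_self _
  · obtain ⟨hM, -⟩ | ⟨hM, hij⟩ := h.coxeterMatrix_of_ne hij
    · rw [hM, pow_zero]
    · exact unitReflection_mul_unitReflection_pow_eq_one h.isSymm _ _ hM hij

/-- The abstract Coxeter system attached to a simple system. -/
abbrev coxeterSystem (h : IsSimpleSystem B α) :
    CoxeterSystem h.coxeterMatrix h.coxeterMatrix.Group :=
  h.coxeterMatrix.toCoxeterSystem

/-- The geometric representation of the abstract Coxeter group by products of `B`-reflections. -/
def geometricRep (h : IsSimpleSystem B α) : h.coxeterMatrix.Group →* (E ≃ₗ[ℝ] E) :=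
  h.coxeterSystem.lift ⟨h.simpleReflection, h.isLiftable_simpleReflection⟩

lemma geometricRep_simple (h : IsSimpleSystem B α) (i : κ) :
    h.geometricRep (h.coxeterSystem.simple i) = h.simpleReflection i :=
  h.coxeterSystem.lift_apply_simple h.isLiftable_simpleReflection i

lemma range_geometricRep (h : IsSimpleSystem B α) :
    h.geometricRep.range = Subgroup.closure (Set.range h.simpleReflection) := by
  rw [MonoidHom.range_eq_map, ← h.coxeterSystem.subgroup_closure_range_simple,
    MonoidHom.map_closure, ← Set.range_comp]
  exact congr_arg _ (congr_arg _ (funext h.geometricRep_simple))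

lemma apply_geometricRep (h : IsSimpleSystem B α) (w : h.coxeterMatrix.Group) (u v : E) :
    B (h.geometricRep w u) (h.geometricRep w v) = B u v := by
  induction w using h.coxeterSystem.simple_induction_left with
  | one => simp
  | mul_simple_left w i ih =>
    rw [map_mul, h.geometricRep_simple, LinearEquiv.mul_apply, LinearEquiv.mul_apply]
    exact (apply_unitReflection h.isSymm _ _ _).trans ih

open Polynomial Polynomial.Chebyshev CoxeterSystem in
lemma geometricRep_alternatingWord_apply (h : IsSimpleSystem B α) (i j : κ) (n : ℕ) :
    h.geometricRep (h.coxeterSystem.wordProd (alternatingWord i j n)) (α i) =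
      if Even n then (U ℝ n).eval (-B (α i) (α j)) • α i + (U ℝ (n - 1)).eval (-B (α i) (α j)) • α j
      else (U ℝ (n - 1)).eval (-B (α i) (α j)) • α i + (U ℝ n).eval (-B (α i) (α j)) • α j := by
  rw [prod_alternatingWord_eq_mul_pow]
  split_ifs with hn
  · obtain ⟨m, rfl⟩ := even_iff_two_dvd.1 hn
    rw [one_mul, map_pow, map_mul, h.geometricRep_simple, h.geometricRep_simple,
      Nat.mul_div_cancel_left m two_pos]
    exact mod_cast unitReflection_mul_unitReflection_pow_apply_self h.isSymm _ _ m
  · obtain ⟨m, rfl⟩ := Nat.not_even_iff_odd.1 hn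
    rw [map_mul, map_pow, map_mul, h.geometricRep_simple, h.geometricRep_simple,
      show (2 * m + 1) / 2 = m by lia]
    push_cast
    rw [add_sub_cancel_right]
    exact unitReflection_mul_unitReflection_pow_apply_self' h.isSymm _ _ m

open CoxeterSystem in
lemma exists_geometricRep_alternatingWord_apply_eq (h : IsSimpleSystem B α) {i j : κ}
    (hij : i ≠ j) {n : ℕ} (hn : h.coxeterMatrix i j ≠ 0 → n + 1 ≤ h.coxeterMatrix i j) :
    ∃ p q : ℝ, 0 ≤ p ∧ 0 ≤ q ∧
      h.geometricRep (h.coxeterSystem.wordProd (alternatingWord i j n)) (α i) =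
        p • α i + q • α j := by
  set c := -B (α i) (α j) with hc
  obtain ⟨hp, hq⟩ : 0 ≤ (Polynomial.Chebyshev.U ℝ n).eval c ∧
      0 ≤ (Polynomial.Chebyshev.U ℝ (n - 1)).eval c := by
    obtain ⟨-, hle⟩ | ⟨hM, heq⟩ := h.coxeterMatrix_of_ne hij
    · obtain ⟨hpos, hmono⟩ := eval_U_nonneg_and_le_of_one_le (c := c) (by linarith) n
      exact ⟨hpos.trans hmono, hpos⟩
    · have hn := hn (by lia)
      rw [hc, heq, neg_neg]
      exact ⟨by simpa using eval_U_cos_pi_div_nonneg hM hn,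
        eval_U_cos_pi_div_nonneg hM (by lia)⟩
  rw [h.geometricRep_alternatingWord_apply]
  split_ifs
  exacts [⟨_, _, hp, hq, rfl⟩, ⟨_, _, hq, hp, rfl⟩]

lemma geometricRep_apply_mem_hull (h : IsSimpleSystem B α) {w : h.coxeterMatrix.Group} {i : κ}
    (hw : ¬h.coxeterSystem.IsRightDescent w i) :
    h.geometricRep w (α i) ∈ PointedCone.hull ℝ (Set.range α) := by
  induction hl : h.coxeterSystem.length w using Nat.strong_induction_on generalizing w i with
  | _ l ih =>
  obtain rfl | hw1 := eq_or_ne w 1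
  · simpa using PointedCone.subset_hull (Set.mem_range_self i)
  obtain ⟨j, hj⟩ := h.coxeterSystem.exists_rightDescent_of_ne_one hw1
  have hij : i ≠ j := fun hij ↦ hw (hij ▸ hj)
  obtain ⟨v, n, rfl, hlen, hvi, hvj⟩ :=
    exists_eq_mul_wordProd_alternatingWord h.coxeterSystem j hw
  have hn : n ≠ 0 := by
    rintro rfl
    exact hvj (by simpa [CoxeterSystem.alternatingWord] using hj)
  have hle : h.coxeterMatrix i j ≠ 0 → n + 1 ≤ h.coxeterMatrix i j := by
    rw [h.coxeterMatrix.symmetric]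
    refine le_of_length_mul_wordProd_alternatingWord (cs := h.coxeterSystem) (v := v) ?_
    rw [CoxeterSystem.alternatingWord_succ, CoxeterSystem.wordProd_concat, ← mul_assoc,
      h.coxeterSystem.not_isRightDescent_iff.1 hw, hlen, add_assoc]
  obtain ⟨p, q, hp, hq, hpq⟩ := h.exists_geometricRep_alternatingWord_apply_eq hij hle
  have hlt : h.coxeterSystem.length v < l := by lia
  rw [map_mul, LinearEquiv.mul_apply, hpq, map_add, map_smul, map_smul]
  exact add_mem (PointedCone.smul_mem _ hp (ih _ hlt hvi rfl))
    (PointedCone.smul_mem _ hq (ih _ hlt hvj rfl))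

lemma neg_geometricRep_apply_mem_hull (h : IsSimpleSystem B α) {w : h.coxeterMatrix.Group}
    {i : κ} (hw : h.coxeterSystem.IsRightDescent w i) :
    -h.geometricRep w (α i) ∈ PointedCone.hull ℝ (Set.range α) := by
  have hmem := h.geometricRep_apply_mem_hull
    (h.coxeterSystem.isRightDescent_iff_not_isRightDescent_mul.1 hw)
  rwa [map_mul, h.geometricRep_simple, LinearEquiv.mul_apply, simpleReflection,
    unitReflection_apply_self, map_neg] at hmem

lemma geometricRep_apply_mem_span_supp (h : IsSimpleSystem B α) (w : h.coxeterMatrix.Group)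
    (i : κ) : h.geometricRep w (α i) ∈
      Submodule.span ℝ (α '' ((matrixGraph (gramMatrix B α)).connectedComponentMk i).supp) := by
  induction w using h.coxeterSystem.simple_induction_left with
  | one =>
    rw [map_one]
    exact Submodule.subset_span (Set.mem_image_of_mem α rfl)
  | mul_simple_left w j ih =>
    rw [map_mul, h.geometricRep_simple, LinearEquiv.mul_apply, simpleReflection,
      unitReflection_apply]
    set S := ((matrixGraph (gramMatrix B α)).connectedComponentMk i).supp
    refine sub_mem ih ?_
    by_cases hj : j ∈ S
    · exact Submodule.smul_mem _ _ (Submodule.subset_span ⟨j, hj, rfl⟩)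
    · have hperp : Submodule.span ℝ (α '' S) ≤ LinearMap.ker (B (α j)) := by
        rw [Submodule.span_le]
        rintro _ ⟨k, hk, rfl⟩
        by_contra hjk
        have hreach : (matrixGraph (gramMatrix B α)).Reachable j k := matrixGraph_reachable hjk
        exact hj ((SimpleGraph.ConnectedComponent.eq.2 hreach).trans hk)
      rw [LinearMap.mem_ker.1 (hperp ih), mul_zero, zero_smul]
      exact zero_mem _

end IsSimpleSystem

section KernelOfPosSemidef

open Matrix

variable {κ : Type*} [Fintype κ] {A : Matrix κ κ ℝ} {z : κ → ℝ}

lemma mulVec_posPart_eq_zero (hA : A.PosSemidef) (hoff : ∀ i j, i ≠ j → A i j ≤ 0)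
    (hz : A *ᵥ z = 0) : A *ᵥ z⁺ = 0 := by
  have hpos_neg : A *ᵥ z⁺ = A *ᵥ z⁻ := by
    rw [← sub_eq_zero, ← mulVec_sub, posPart_sub_negPart, hz]
  have hle : z⁺ ⬝ᵥ A *ᵥ z⁺ ≤ 0 := by
    rw [hpos_neg]
    simp only [dotProduct, mulVec, Finset.mul_sum]
    refine Finset.sum_nonpos fun i _ ↦ Finset.sum_nonpos fun j _ ↦ ?_
    obtain rfl | hij := eq_or_ne i j
    · have hdisj : z⁺ i * z⁻ i = 0 := by
        rw [Pi.posPart_apply, Pi.negPart_apply, posPart_eq_ite, negPart_eq_ite]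
        grind
      rw [mul_left_comm, hdisj, mul_zero]
    · exact mul_nonpos_of_nonneg_of_nonpos (posPart_nonneg z i)
        (mul_nonpos_of_nonpos_of_nonneg (hoff i j hij) (negPart_nonneg z j))
  exact (hA.dotProduct_mulVec_zero_iff z⁺).1 (hle.antisymm (hA.dotProduct_mulVec_nonneg z⁺))

lemma apply_eq_zero_of_reachable (hA : A.IsSymm) (hoff : ∀ i j, i ≠ j → A i j ≤ 0)
    (hz0 : 0 ≤ z) (hz : A *ᵥ z = 0) {i j : κ} (hij : (matrixGraph A).Reachable i j)
    (hzi : z i = 0) : z j = 0 := by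
  rw [SimpleGraph.reachable_iff_reflTransGen] at hij
  induction hij with
  | refl => exact hzi
  | @tail j k _ hjk hzj =>
    have hle (l) : A j l * z l ≤ 0 := by
      obtain rfl | hjl := eq_or_ne j l
      · rw [hzj, mul_zero]
      · exact mul_nonpos_of_nonpos_of_nonneg (hoff j l hjl) (hz0 l)
    have hzero : A j k * z k = 0 :=
      (Finset.sum_eq_zero_iff_of_nonpos fun l _ ↦ hle l).1 (congr_fun hz j) k (Finset.mem_univ k)
    have hne : A j k ≠ 0 := by
      rw [matrixGraph, SimpleGraph.fromRel_adj, hA.apply j k, or_self] at hjk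
      exact hjk.2
    exact (mul_eq_zero.1 hzero).resolve_left hne

/-- The negative part `z⁻` is again a kernel vector, so on a component of the graph it vanishes
identically or nowhere; hence `z` has constant sign. -/
lemma eq_zero_of_mulVec_eq_zero (hA : A.PosSemidef) (hoff : ∀ i j, i ≠ j → A i j ≤ 0)
    (hz : A *ᵥ z = 0) (hsum : ∑ i, z i = 0) {C : (matrixGraph A).ConnectedComponent}
    (hC : ∀ i ∉ C.supp, z i = 0) : z = 0 := by
  have hsymm : A.IsSymm := hA.isHermitian
  have hneg : A *ᵥ z⁻ = 0 := by
    rw [← posPart_neg]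
    exact mulVec_posPart_eq_zero hA hoff (by rw [mulVec_neg, hz, neg_zero])
  have hz_mono : 0 ≤ z ∨ z ≤ 0 := by
    by_cases hex : ∃ i ∈ C.supp, z⁻ i = 0
    · obtain ⟨i, hi, hzi⟩ := hex
      refine .inl (negPart_eq_zero.1 (funext fun j ↦ ?_))
      by_cases hj : j ∈ C.supp
      · exact apply_eq_zero_of_reachable hsymm hoff (negPart_nonneg z) hneg
          (C.reachable_of_mem_supp hi hj) hzi
      · rw [Pi.negPart_apply, hC j hj, negPart_zero, Pi.zero_apply]
    · refine .inr fun i ↦ ?_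
      by_cases hi : i ∈ C.supp
      · exact (negPart_pos_iff.1 (lt_of_le_of_ne (negPart_nonneg z i)
          (Ne.symm fun hzi ↦ hex ⟨i, hi, hzi⟩))).le
      · exact (hC i hi).le
  ext i
  obtain hnonneg | hnonpos := hz_mono
  · exact (Finset.sum_eq_zero_iff_of_nonneg fun j _ ↦ hnonneg j).1 hsum i (Finset.mem_univ i)
  · exact (Finset.sum_eq_zero_iff_of_nonpos fun j _ ↦ hnonpos j).1 hsum i (Finset.mem_univ i)

variable {E : Type*} [AddCommGroup E] [Module ℝ E] {B : LinearMap.BilinForm ℝ E}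

lemma gramMatrix_mulVec (α : κ → E) (c : κ → ℝ) :
    gramMatrix B α *ᵥ c = fun i ↦ B (α i) (∑ j, c j • α j) := by
  ext i
  simp only [gramMatrix, mulVec, dotProduct, of_apply, map_sum, map_smul, smul_eq_mul, mul_comm]

lemma dotProduct_gramMatrix_mulVec (α : κ → E) (c d : κ → ℝ) :
    c ⬝ᵥ gramMatrix B α *ᵥ d = B (∑ i, c i • α i) (∑ j, d j • α j) := by
  rw [gramMatrix_mulVec, LinearMap.map_sum₂]
  exact Finset.sum_congr rfl fun i _ ↦ (LinearMap.map_smul₂ B (c i) (α i) _).symm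

lemma posSemidef_gramMatrix {κ : Type*} [Finite κ] (hB : B.IsSymm) (hpsd : ∀ v, 0 ≤ B v v)
    (α : κ → E) : (gramMatrix B α).PosSemidef :=
  have := Fintype.ofFinite κ
  .of_dotProduct_mulVec_nonneg (Matrix.ext fun i j ↦ hB.eq (α j) (α i)) fun c ↦
    dotProduct_gramMatrix_mulVec α c c ▸ hpsd _

end KernelOfPosSemidef

lemma repr_nonneg_of_mem_hull {κ E : Type*} [AddCommGroup E] [Module ℝ E]
    (b : Module.Basis κ ℝ E) {x : E} (hx : x ∈ PointedCone.hull ℝ (Set.range b)) (i : κ) :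
    0 ≤ b.repr x i := by
  induction hx using Submodule.span_induction with
  | mem x hx =>
    obtain ⟨j, rfl⟩ := hx
    rw [b.repr_self]
    exact Finsupp.single_nonneg.2 zero_le_one i
  | zero => simp
  | add x y _ _ hx hy => simpa using add_nonneg hx hy
  | smul a x _ hx =>
    rw [← Nonneg.coe_smul, map_smul, Finsupp.smul_apply]
    exact mul_nonneg a.2 hx

lemma eq_of_unitReflection_eq {E : Type*} [AddCommGroup E] [Module ℝ E]
    {B : LinearMap.BilinForm ℝ E} {x y : E} (hx : B x x = 1) (hy : B y y = 1)
    (hxy : 0 < B x y) (h : unitReflection hx = unitReflection hy) : x = y := by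
  have hy_eq : y = B x y • x := by
    have hneg : y - (2 * B x y) • x = -y := by
      rw [← unitReflection_apply hx, h, unitReflection_apply_self]
    linear_combination (norm := module) (1 / 2 : ℝ) • hneg
  have hsq : B x y * B x y = 1 := by
    rw [hy_eq] at hy
    simpa [hx] using hy
  have hone : B x y = 1 := by nlinarith
  rw [hy_eq, hone, one_smul]

section Roots

variable {κ E : Type*} [NormedAddCommGroup E] [NormedSpace ℝ E] {B : LinearMap.BilinForm ℝ E}
  {b : Module.Basis κ ℝ E}

namespace IsSimpleSystem

lemma cox_eq_range_geometricRep (h : IsSimpleSystem B b) : cox B b = h.geometricRep.range := by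
  rw [cox, h.range_geometricRep]
  congr 1
  ext e
  refine exists_congr fun i ↦ ?_
  simp only [eq_comm (b := e), LinearEquiv.ext_iff, simpleReflection, unitReflection_apply,
    h.apply_self, div_one]

lemma mem_Phi_iff (h : IsSimpleSystem B b) {ρ : E} :
    ρ ∈ Phi B b ↔ ∃ w i, h.geometricRep w (b i) = ρ := by
  simp only [Phi, Set.mem_ofPred_eq, h.cox_eq_range_geometricRep, MonoidHom.mem_range,
    exists_exists_eq_and]

lemma apply_self_of_mem_Phi (h : IsSimpleSystem B b) {ρ : E} (hρ : ρ ∈ Phi B b) : B ρ ρ = 1 := by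
  obtain ⟨w, i, rfl⟩ := h.mem_Phi_iff.1 hρ
  rw [h.apply_geometricRep, h.apply_self]

lemma unitReflection_mem_cox (h : IsSimpleSystem B b) {ρ : E} (hρ : ρ ∈ Phi B b) :
    unitReflection (h.apply_self_of_mem_Phi hρ) ∈ cox B b := by
  obtain ⟨w, i, rfl⟩ := h.mem_Phi_iff.1 hρ
  rw [h.cox_eq_range_geometricRep]
  refine ⟨w * h.coxeterSystem.simple i * w⁻¹, ?_⟩
  rw [map_mul, map_mul, map_inv, h.geometricRep_simple]
  exact mul_unitReflection_mul_inv (h.apply_self i) (h.apply_geometricRep w)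

lemma repr_nonneg_or_nonpos (h : IsSimpleSystem B b) {ρ : E} (hρ : ρ ∈ Phi B b) :
    (∀ i, 0 ≤ b.repr ρ i) ∨ ∀ i, b.repr ρ i ≤ 0 := by
  obtain ⟨w, i, rfl⟩ := h.mem_Phi_iff.1 hρ
  by_cases hw : h.coxeterSystem.IsRightDescent w i
  · refine .inr fun j ↦ ?_
    simpa using repr_nonneg_of_mem_hull b (h.neg_geometricRep_apply_mem_hull hw) j
  · exact .inl (repr_nonneg_of_mem_hull b (h.geometricRep_apply_mem_hull hw))

lemma eq_one_of_repr_apply_pos (h : IsSimpleSystem B b) {g : E ≃ₗ[ℝ] E} (hg : g ∈ cox B b)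
    (hpos : ∀ i, 0 < b.repr (g (b i)) i) : g = 1 := by
  rw [h.cox_eq_range_geometricRep] at hg
  obtain ⟨w, rfl⟩ := hg
  by_contra hw
  obtain ⟨i, hi⟩ := h.coxeterSystem.exists_rightDescent_of_ne_one
    (w := w) (by rintro rfl; exact hw (map_one _))
  have := repr_nonneg_of_mem_hull b (h.neg_geometricRep_apply_mem_hull hi) i
  rw [map_neg, Finsupp.neg_apply] at this
  linarith [hpos i]

lemma exists_mem_span_supp (h : IsSimpleSystem B b) {ρ : E} (hρ : ρ ∈ Phi B b) :
    ∃ C : (matrixGraph (gramMatrix B b)).ConnectedComponent,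
      ρ ∈ Submodule.span ℝ (b '' C.supp) := by
  obtain ⟨w, i, rfl⟩ := h.mem_Phi_iff.1 hρ
  exact ⟨_, h.geometricRep_apply_mem_span_supp w i⟩

lemma neg_mem_Phi (h : IsSimpleSystem B b) {ρ : E} (hρ : ρ ∈ Phi B b) : -ρ ∈ Phi B b := by
  obtain ⟨w, i, rfl⟩ := h.mem_Phi_iff.1 hρ
  refine h.mem_Phi_iff.2 ⟨w * h.coxeterSystem.simple i, i, ?_⟩
  rw [map_mul, h.geometricRep_simple, LinearEquiv.mul_apply, simpleReflection,
    unitReflection_apply_self, map_neg]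

lemma posPhi_infinite (h : IsSimpleSystem B b) (hinf : (Phi B b).Infinite) :
    (posPhi B b).Infinite := by
  contrapose! hinf
  refine (hinf.union hinf.neg).subset fun ρ hρ ↦ ?_
  obtain hnonneg | hnonpos := h.repr_nonneg_or_nonpos hρ
  · exact .inl ⟨hρ, hnonneg⟩
  · exact .inr ⟨h.neg_mem_Phi hρ, fun i ↦ by simpa using hnonpos i⟩

/-- For roots `u, v` close to `x` the element `r_u r_v` of `W` is close to `1`, hence fixes the
signs of all simple roots, hence is `1`. -/
lemma exists_nhds_inter_Phi_subsingleton [Finite κ] (h : IsSimpleSystem B b) (x : E) :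
    ∃ U ∈ 𝓝 x, (U ∩ Phi B b).Subsingleton := by
  have := Module.Finite.of_basis b
  have hB : Continuous fun p : E × E ↦ B p.1 p.2 := B.toContinuousBilinearMap.continuous₂
  by_cases hx : B x x = 1
  · let r (u y : E) : E := y - (2 * B u y) • u
    have hr {f g : E × E → E} (hf : Continuous f) (hg : Continuous g) :
        Continuous fun p ↦ r (f p) (g p) :=
      hg.sub ((continuous_const.mul (hB.comp (hf.prodMk hg))).smul hf)
    have hcoord : ∀ᶠ p : E × E in 𝓝 (x, x), ∀ i, 0 < b.coord i (r p.1 (r p.2 (b i))) := by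
      refine eventually_all.2 fun i ↦ Tendsto.eventually_const_lt ?_
        (((b.coord i).continuous_of_finiteDimensional.comp
          (hr continuous_fst (hr continuous_snd continuous_const))).tendsto (x, x))
      have hrr : r x (r x (b i)) = b i := LinearEquiv.congr_fun (unitReflection_mul_self hx) (b i)
      simp [hrr]
    have hpair : ∀ᶠ p : E × E in 𝓝 (x, x), 0 < B p.1 p.2 :=
      (hB.tendsto (x, x)).eventually_const_lt (one_pos.trans_eq hx.symm)
    obtain ⟨U, hU, hUU⟩ := mem_prod_same_iff.1 <|
      nhds_prod_eq.ge (hcoord.and hpair)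
    refine ⟨U, hU, fun u hu v hv ↦ ?_⟩
    obtain ⟨hpos, huv⟩ := hUU (Set.mk_mem_prod hu.1 hv.1)
    have hone := h.eq_one_of_repr_apply_pos
      (mul_mem (h.unitReflection_mem_cox hu.2) (h.unitReflection_mem_cox hv.2)) hpos
    refine eq_of_unitReflection_eq (h.apply_self_of_mem_Phi hu.2) (h.apply_self_of_mem_Phi hv.2)
      huv ?_
    rw [← unitReflection_inv (h.apply_self_of_mem_Phi hv.2)]
    exact eq_inv_of_mul_eq_one_left hone
  · refine ⟨{y | B y y ≠ 1}, ?_, fun y hy ↦ absurd (h.apply_self_of_mem_Phi hy.2) hy.1⟩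
    exact (hB.comp (continuous_id.prodMk continuous_id)).continuousAt.eventually_ne hx

lemma finite_inter_Phi [Finite κ] (h : IsSimpleSystem B b) {K : Set E} (hK : IsCompact K) :
    (K ∩ Phi B b).Finite := by
  by_contra hinf
  obtain ⟨x, -, hx⟩ := Set.Infinite.exists_accPt_of_subset_isCompact hinf hK Set.inter_subset_left
  obtain ⟨U, hU, hsub⟩ := h.exists_nhds_inter_Phi_subsingleton x
  refine Set.Infinite.of_accPt (hx.nhds_inter hU) (hsub.finite.subset ?_)
  exact Set.inter_subset_inter_right U Set.inter_subset_right

end IsSimpleSystem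

section Normalization

variable [Fintype κ]

lemma l1_nrm {v : E} (hv : l1 b v ≠ 0) : l1 b (nrm b v) = 1 := by
  simp only [l1, nrm, map_smul, Finsupp.smul_apply, smul_eq_mul, ← Finset.mul_sum]
  exact inv_mul_cancel₀ hv

lemma apply_nrm_self (v : E) : B (nrm b v) (nrm b v) = (l1 b v)⁻¹ ^ 2 * B v v := by
  simp only [nrm, map_smul, LinearMap.smul_apply, smul_eq_mul]
  ring

lemma repr_nrm_nonneg {v : E} (hv : ∀ i, 0 ≤ b.repr v i) (i : κ) : 0 ≤ b.repr (nrm b v) i := by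
  rw [nrm, map_smul, Finsupp.smul_apply]
  exact smul_nonneg (inv_nonneg.2 (Finset.sum_nonneg fun j _ ↦ hv j)) (hv i)

lemma continuous_l1 : Continuous (l1 b) :=
  have := Module.Finite.of_basis b
  continuous_finsetSum _ fun i _ ↦ (b.coord i).continuous_of_finiteDimensional

lemma isCompact_repr_nonneg_inter_l1_le (M : ℝ) :
    IsCompact {v | (∀ i, 0 ≤ b.repr v i) ∧ l1 b v ≤ M} := by
  have hM : {v | (∀ i, 0 ≤ b.repr v i) ∧ l1 b v ≤ M} =
      b.equivFunL.toHomeomorph ⁻¹' {c | (∀ i, 0 ≤ c i) ∧ ∑ i, c i ≤ M} := rfl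
  rw [hM, Homeomorph.isCompact_preimage]
  refine isCompact_Icc (a := 0) (b := fun _ ↦ M) |>.of_isClosed_subset ?_ ?_
  · exact (isClosed_le continuous_const continuous_id).inter
      (isClosed_le (continuous_finsetSum _ fun i _ ↦ continuous_apply i) continuous_const)
  · exact fun c hc ↦ ⟨hc.1, fun i ↦
      (Finset.single_le_sum (fun j _ ↦ hc.1 j) (Finset.mem_univ i)).trans hc.2⟩

lemma Eset_subset_of_isClosed {S : Set E} (hS : IsClosed S) (hsub : nPhi B b ⊆ S) :
    Eset B b ⊆ S := fun x hx ↦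
  isClosed_iff_accPt.1 hS x (AccPt.mono hx (principal_mono.2 hsub))

end Normalization

namespace IsSimpleSystem

variable [Fintype κ]

lemma l1_pos_of_mem_posPhi (h : IsSimpleSystem B b) {ρ : E} (hρ : ρ ∈ posPhi B b) :
    0 < l1 b ρ := by
  refine (Finset.sum_nonneg fun i _ ↦ hρ.2 i).lt_of_ne' fun hzero ↦ ?_
  have hρ0 : ρ = 0 := b.ext_elem fun i ↦ by
    rw [map_zero]
    exact (Finset.sum_eq_zero_iff_of_nonneg fun i _ ↦ hρ.2 i).1 hzero i (Finset.mem_univ i)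
  simpa [hρ0] using h.apply_self_of_mem_Phi hρ.1

lemma apply_nrm_self_of_mem_posPhi (h : IsSimpleSystem B b) {ρ : E} (hρ : ρ ∈ posPhi B b) :
    B (nrm b ρ) (nrm b ρ) = (l1 b ρ)⁻¹ ^ 2 := by
  rw [apply_nrm_self, h.apply_self_of_mem_Phi hρ.1, mul_one]

lemma injOn_nrm_posPhi (h : IsSimpleSystem B b) : (posPhi B b).InjOn (nrm b) := by
  intro ρ hρ σ hσ hρσ
  have hl1 : l1 b ρ = l1 b σ := by
    have hsq := h.apply_nrm_self_of_mem_posPhi hρ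
    rw [hρσ, h.apply_nrm_self_of_mem_posPhi hσ] at hsq
    exact (inv_injective ((pow_left_inj₀ (inv_nonneg.2 (h.l1_pos_of_mem_posPhi hσ).le)
      (inv_nonneg.2 (h.l1_pos_of_mem_posPhi hρ).le) two_ne_zero).1 hsq)).symm
  rw [nrm, nrm, hl1] at hρσ
  exact smul_right_injective E (inv_ne_zero (h.l1_pos_of_mem_posPhi hσ).ne') hρσ

lemma finite_posPhi_inter_l1_le (h : IsSimpleSystem B b) (M : ℝ) :
    {ρ ∈ posPhi B b | l1 b ρ ≤ M}.Finite :=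
  (h.finite_inter_Phi (isCompact_repr_nonneg_inter_l1_le M)).subset
    fun _ hρ ↦ ⟨⟨hρ.1.2, hρ.2⟩, hρ.1.1⟩

lemma finite_nPhi_inter_lt_apply_self (h : IsSimpleSystem B b) {ε : ℝ} (hε : 0 < ε) :
    {x ∈ nPhi B b | ε < B x x}.Finite := by
  refine ((h.finite_posPhi_inter_l1_le (√ε)⁻¹).image (nrm b)).subset ?_
  rintro _ ⟨⟨ρ, hρ, rfl⟩, hlt⟩
  refine ⟨ρ, ⟨hρ, ?_⟩, rfl⟩
  rw [h.apply_nrm_self_of_mem_posPhi hρ] at hlt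
  exact le_inv_of_le_inv₀ (Real.sqrt_pos.2 hε)
    (Real.sqrt_le_left (inv_nonneg.2 (h.l1_pos_of_mem_posPhi hρ).le) |>.2 hlt.le)

lemma Eset_subset_isoQ (h : IsSimpleSystem B b) : Eset B b ⊆ isoQ B := by
  have := Module.Finite.of_basis b
  have hB : Continuous fun x ↦ B x x :=
    B.toContinuousBilinearMap.continuous₂.comp (continuous_id.prodMk continuous_id)
  intro x hx
  have hnonneg : 0 ≤ B x x := by
    refine Eset_subset_of_isClosed (isClosed_le continuous_const hB) ?_ hx
    rintro _ ⟨ρ, hρ, rfl⟩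
    exact (sq_nonneg _).trans_eq (h.apply_nrm_self_of_mem_posPhi hρ).symm
  refine hnonneg.antisymm' (le_of_not_gt fun hpos ↦ ?_)
  have hnhds : {y | B x x / 2 < B y y} ∈ 𝓝 x :=
    hB.continuousAt.eventually_const_lt (half_lt_self hpos)
  refine Set.Infinite.of_accPt (AccPt.nhds_inter hx hnhds)
    ((h.finite_nPhi_inter_lt_apply_self (half_pos hpos)).subset fun y hy ↦ ⟨hy.2, hy.1⟩)

lemma Eset_subset_l1_eq_one (h : IsSimpleSystem B b) : Eset B b ⊆ {v | l1 b v = 1} := by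
  refine Eset_subset_of_isClosed (isClosed_eq continuous_l1 continuous_const) ?_
  rintro _ ⟨ρ, hρ, rfl⟩
  exact l1_nrm (h.l1_pos_of_mem_posPhi hρ).ne'

lemma exists_mem_span_supp_of_mem_Eset (h : IsSimpleSystem B b) {x : E} (hx : x ∈ Eset B b) :
    ∃ C : (matrixGraph (gramMatrix B b)).ConnectedComponent,
      x ∈ Submodule.span ℝ (b '' C.supp) := by
  have := Module.Finite.of_basis b
  simp only [← SetLike.mem_coe, ← Set.mem_iUnion]
  refine Eset_subset_of_isClosed (isClosed_iUnion_of_finite fun C ↦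
    Submodule.closed_of_finiteDimensional _) ?_ hx
  rintro _ ⟨ρ, hρ, rfl⟩
  obtain ⟨C, hC⟩ := h.exists_mem_span_supp hρ.1
  exact Set.mem_iUnion.2 ⟨C, Submodule.smul_mem _ _ hC⟩

lemma Eset_nonempty (h : IsSimpleSystem B b) (hinf : (Phi B b).Infinite) :
    (Eset B b).Nonempty := by
  have hnPhi : (nPhi B b).Infinite := (h.posPhi_infinite hinf).image h.injOn_nrm_posPhi
  obtain ⟨x, -, hx⟩ := hnPhi.exists_accPt_of_subset_isCompact
    (isCompact_repr_nonneg_inter_l1_le (b := b) 1) (by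
      rintro _ ⟨ρ, hρ, rfl⟩
      exact ⟨repr_nrm_nonneg hρ.2, (l1_nrm (h.l1_pos_of_mem_posPhi hρ).ne').le⟩)
  exact ⟨x, hx⟩

lemma subsingleton_isoQ_inter_span_supp (h : IsSimpleSystem B b) (hpsd : ∀ v, 0 ≤ B v v)
    (C : (matrixGraph (gramMatrix B b)).ConnectedComponent) :
    {x | x ∈ isoQ B ∧ l1 b x = 1 ∧ x ∈ Submodule.span ℝ (b '' C.supp)}.Subsingleton := by
  have hA := posSemidef_gramMatrix h.isSymm hpsd b
  have hker {x : E} (hx : x ∈ isoQ B) : (gramMatrix B b).mulVec (b.repr x) = 0 := by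
    rw [← hA.dotProduct_mulVec_zero_iff, star_trivial, dotProduct_gramMatrix_mulVec, b.sum_repr]
    exact hx
  have hsupp {x : E} (hx : x ∈ Submodule.span ℝ (b '' C.supp)) (i : κ) (hi : i ∉ C.supp) :
      b.repr x i = 0 :=
    Finsupp.notMem_support_iff.1 fun hxi ↦ hi (b.mem_span_image.1 hx hxi)
  rintro x ⟨hxQ, hx1, hxC⟩ y ⟨hyQ, hy1, hyC⟩
  have hsub : b.equivFun x - b.equivFun y = 0 := by
    refine eq_zero_of_mulVec_eq_zero hA (fun i j hij ↦ h.apply_nonpos hij) (C := C) ?_ ?_ ?_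
    · rw [Matrix.mulVec_sub, b.equivFun_apply, b.equivFun_apply, hker hxQ, hker hyQ, sub_zero]
    · exact (Finset.sum_sub_distrib ..).trans (sub_eq_zero.2 (hx1.trans hy1.symm))
    · exact fun i hi ↦ sub_eq_zero.2 ((hsupp hxC i hi).trans (hsupp hyC i hi).symm)
  exact b.equivFun.injective (sub_eq_zero.1 hsub)

end IsSimpleSystem

end Roots

/-- If `Φ` is infinite and `B` is positive semidefinite but not positive definite
(i.e. `(Φ,Δ)` is an affine based root system), then `E(Φ)` is finite; if moreover
`(Φ,Δ)` is irreducible, then `E(Φ)` is a singleton, equal to `Q̂ = Q ∩ V₁`. -/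
theorem statement8 (B : LinearMap.BilinForm ℝ V) (Δ : Module.Basis ι ℝ V)
    (hsymm : ∀ u v : V, B u v = B v u)
    (hdiag : ∀ i : ι, B (Δ i) (Δ i) = 1)
    (hoff : ∀ i j : ι, i ≠ j → B (Δ i) (Δ j) ≤ -1 ∨
      ∃ k : ℕ, 2 ≤ k ∧ B (Δ i) (Δ j) = -Real.cos (Real.pi / (k : ℝ)))
    (hinf : (Phi B Δ).Infinite)
    (hpsd : ∀ v : V, 0 ≤ B v v)
    (hnd : ¬ ∀ v : V, v ≠ 0 → 0 < B v v) :
    (Eset B Δ).Finite ∧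
    ((¬ ∃ I : Set ι, I.Nonempty ∧ Iᶜ.Nonempty ∧ ∀ i ∈ I, ∀ j ∈ Iᶜ, B (Δ i) (Δ j) = 0) →
      ∃ x : V, Eset B Δ = {x} ∧ isoQ B ∩ { v : V | l1 Δ v = 1 } = {x}) := by
  have h : IsSimpleSystem B Δ := ⟨⟨hsymm⟩, hdiag, hoff⟩
  have hQ : Eset B Δ ⊆ isoQ B ∩ {v | l1 Δ v = 1} :=
    Set.subset_inter h.Eset_subset_isoQ h.Eset_subset_l1_eq_one
  refine ⟨?_, fun hirr ↦ ?_⟩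
  · refine (Set.finite_iUnion fun C ↦
      (h.subsingleton_isoQ_inter_span_supp hpsd C).finite).subset fun x hx ↦ ?_
    obtain ⟨C, hC⟩ := h.exists_mem_span_supp_of_mem_Eset hx
    exact Set.mem_iUnion.2 ⟨C, (hQ hx).1, (hQ hx).2, hC⟩
  · obtain ⟨x, hx⟩ := h.Eset_nonempty hinf
    obtain ⟨C, -⟩ := h.exists_mem_span_supp_of_mem_Eset hx
    have hsub : (isoQ B ∩ {v | l1 Δ v = 1}).Subsingleton :=
      (h.subsingleton_isoQ_inter_span_supp hpsd C).anti fun v hv ↦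
        ⟨hv.1, hv.2, by simp [supp_eq_univ_of_irreducible C hirr, Δ.span_eq]⟩
    exact ⟨x, (hsub.anti hQ).eq_singleton_of_mem hx, hsub.eq_singleton_of_mem (hQ hx)⟩
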